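/- For all z_1, z_2 ∈ ℂ and generic tuples ξ̄ (length l), ū (length n), v̄ (length m): Σ_{ξ̄ ⇒ {ξ̄_I, ξ̄_II}} z_2^{#ξ̄_I}·K^{(z_1)}_{n,#ξ̄_I}(ū | ξ̄_I)·K^{(z_2)}_{m,#ξ̄_II}(v̄ | ξ̄_II)·f(ξ̄_II, ξ̄_I)·f(ū, ξ̄_II) = K^{(z_1 z_2)}_{n+m,l}({ū, v̄} | ξ̄), and Σ_{ξ̄ ⇒ {ξ̄_I, ξ̄_II}} z_2^{#ξ̄_I}·\bar{K}^{(z_1)}_{n,#ξ̄_I}(ū | ξ̄_I)·\bar{K}^{(z_2)}_{m,#ξ̄_II}(v̄ | ξ̄_II)·f(ξ̄_I, ξ̄_II)·f(ξ̄_II, ū) = \bar{K}^{(z_1 z_2)}_{n+m,l}({ū, v̄} | ξ̄), where the sums run over all partitions of ξ̄ into two disjoint subtuples and {ū, v̄} denotes the concatenated (n+m)-tuple. -/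

import Mathlib

open scoped BigOperators

noncomputable section

/-- The rational function `g(u,v) = c/(u-v)`. -/
def gC (c u v : ℂ) : ℂ := c / (u - v)

/-- The rational function `f(u,v) = (u-v+c)/(u-v)`. -/
def fC (c u v : ℂ) : ℂ := (u - v + c) / (u - v)

/-- The rational function `h(u,v) = (u-v+c)/c`. -/
def hC (c u v : ℂ) : ℂ := (u - v + c) / c

/-- A family of parameters is generic if all pairwise differences avoid `0, ±c, ±2c`. -/
def Generic (c : ℂ) {ι : Type*} (w : ι → ℂ) : Prop :=
  ∀ i j, i ≠ j → w i - w j ≠ 0 ∧ w i - w j ≠ c ∧ w i - w j ≠ -c ∧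
    w i - w j ≠ 2 * c ∧ w i - w j ≠ -2 * c

/-- The modified Izergin determinant `K^{(z)}(x̄|ȳ)`. -/
def KIz (c z : ℂ) {ι κ : Type*} [Fintype ι] [Fintype κ] [DecidableEq κ]
    (x : ι → ℂ) (y : κ → ℂ) : ℂ :=
  Matrix.det (Matrix.of fun j k : κ =>
    -z * (if j = k then 1 else 0) +
      (∏ i, fC c (x i) (y j)) * (∏ i ∈ Finset.univ.erase j, fC c (y j) (y i))
        / hC c (y j) (y k))

/-- The conjugated modified Izergin determinant: `c` is replaced by `-c`. -/
def KIzBar (c z : ℂ) {ι κ : Type*} [Fintype ι] [Fintype κ] [DecidableEq κ]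
    (x : ι → ℂ) (y : κ → ℂ) : ℂ :=
  KIz (-c) z x y

/-- Restriction of a tuple to a subtuple indexed by a `Finset`. -/
def restr {p : ℕ} (w : Fin p → ℂ) (s : Finset (Fin p)) : {x // x ∈ s} → ℂ :=
  fun i => w i.1

/-- Double product `f(w̄_s, w̄_t)` over two subtuples of a tuple. -/
def fSS (c : ℂ) {p : ℕ} (w : Fin p → ℂ) (s t : Finset (Fin p)) : ℂ :=
  ∏ i ∈ s, ∏ j ∈ t, fC c (w i) (w j)

/-! `K^{(z)}(x̄|·)`, as a function of subtuples of `ȳ`, is the subset convolution, twisted by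
`f`, of the multiplicative weights `∏ f(x̄,y_j)` and `∏ (-z)`. The twisted convolution is
associative, and multiplication by a multiplicative weight distributes over it. So the left-hand
side is a convolution of the four weights `∏ f(ū,y_j) f(v̄,y_j)`, `∏ (-z₂) f(ū,y_j)`, `∏ z₂
f(ū,y_j)` and `∏ (-z₁z₂)`, of which the middle two cancel because `K^{(1)}(∅|ȳ) = 0`. Both this
vanishing and the convolution formula come from reading `∏ f(y_j,y_i) / h(y_j,y_k)` as the matrix
of the translation `p(X) ↦ p(X + c)`, which has determinant one and preserves leading
coefficients. -/

/-- The multiplicative set function `S ↦ ∏ j ∈ S, W j`. -/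
def prodWeight {R κ : Type*} [CommMonoid R] (W : κ → R) : Finset κ → R := fun S ↦ ∏ j ∈ S, W j

/-- Subset convolution of set functions, twisted by the kernel `F`: the sum over all partitions
`T = S ⊔ U` of `a S * b U`, each weighted by the double product of `F` over `S × U`. -/
def subsetConv {R κ : Type*} [CommSemiring R] [DecidableEq κ] (F : κ → κ → R)
    (a b : Finset κ → R) : Finset κ → R :=
  fun T ↦ ∑ S ∈ T.powerset, a S * b (T \ S) * ∏ i ∈ S, ∏ j ∈ T \ S, F i j

local notation:70 a:70 "⋆[" F "]" b:71 => subsetConv F a b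

section SubsetConvolution

lemma prodWeight_mul {R κ : Type*} [CommMonoid R] (W W' : κ → R) :
    prodWeight W * prodWeight W' = prodWeight (W * W') :=
  funext fun _ ↦ Finset.prod_mul_distrib.symm

lemma prodWeight_map {R κ κ' : Type*} [CommMonoid R] (e : κ' ↪ κ) (W : κ → R)
    (S : Finset κ') : prodWeight W (S.map e) = prodWeight (W ∘ e) S :=
  Finset.prod_map S e W

variable {R κ : Type*} [CommSemiring R] [DecidableEq κ]

lemma prodWeight_mul_subsetConv (F : κ → κ → R) (W : κ → R) (a b : Finset κ → R) :
    prodWeight W * (a ⋆[F] b) = (prodWeight W * a) ⋆[F] (prodWeight W * b) := by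
  ext T
  simp only [subsetConv, prodWeight, Pi.mul_apply, Finset.mul_sum]
  refine Finset.sum_congr rfl fun S hS ↦ ?_
  rw [← Finset.prod_sdiff (Finset.mem_powerset.1 hS)]
  ring

lemma subsetConv_assoc (F : κ → κ → R) (a b d : Finset κ → R) :
    a ⋆[F] b ⋆[F] d = a ⋆[F] (b ⋆[F] d) := by
  ext T
  simp only [subsetConv, Finset.sum_mul, Finset.mul_sum]
  rw [Finset.sum_sigma', Finset.sum_sigma']
  refine Finset.sum_bij' (fun p _ ↦ ⟨p.2, p.1 \ p.2⟩) (fun p _ ↦ ⟨p.1 ∪ p.2, p.1⟩) ?_ ?_ ?_ ?_ ?_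
  · grind
  · grind
  · rintro ⟨S, A⟩ hp
    simp only [Finset.mem_sigma, Finset.mem_powerset] at hp
    simp [Finset.union_sdiff_of_subset hp.2]
  · rintro ⟨A, B⟩ hp
    simp only [Finset.mem_sigma, Finset.mem_powerset, Finset.subset_sdiff] at hp
    simp [Finset.union_sdiff_cancel_left hp.2.2.symm]
  · rintro ⟨S, A⟩ hp
    obtain ⟨hST, hAS⟩ : S ⊆ T ∧ A ⊆ S := by simpa using hp
    have hTA : T \ A = T \ S ∪ S \ A := (Finset.sdiff_union_sdiff_cancel hST hAS).symm
    have hdisj : Disjoint (T \ S) (S \ A) := by grind [Finset.disjoint_left]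
    have hTAS : (T \ A) \ (S \ A) = T \ S := by grind
    simp only [hTAS]
    simp only [hTA, Finset.prod_union hdisj, Finset.prod_mul_distrib, ← Finset.prod_sdiff hAS]
    ring

lemma subsetConv_single_empty (F : κ → κ → R) (a : Finset κ → R) :
    a ⋆[F] Pi.single ∅ 1 = a := by
  ext T
  rw [subsetConv, Finset.sum_eq_single_of_mem T (Finset.mem_powerset_self T)]
  · simp
  · intro S hS hne
    have : T \ S ≠ ∅ := fun h ↦
      hne ((Finset.mem_powerset.1 hS).antisymm (Finset.sdiff_eq_empty_iff_subset.1 h))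
    simp [this]

lemma subsetConv_univ [Fintype κ] (F : κ → κ → R) (a b : Finset κ → R) :
    (a ⋆[F] b) Finset.univ = ∑ S, a Sᶜ * b S * ∏ i ∈ Sᶜ, ∏ j ∈ S, F i j := by
  rw [subsetConv, Finset.powerset_univ, ← Equiv.sum_comp compl_involutive.toPerm]
  simp

lemma subsetConv_map {κ' : Type*} [DecidableEq κ'] (e : κ' ↪ κ) (F : κ → κ → R)
    (a b : Finset κ → R) (T : Finset κ') :
    (a ⋆[F] b) (T.map e) =
      ((fun S ↦ a (S.map e)) ⋆[fun i j ↦ F (e i) (e j)] fun S ↦ b (S.map e)) T := by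
  have hpowerset : (T.map e).powerset = T.powerset.map (Finset.mapEmbedding e).toEmbedding := by
    ext S
    simp [Finset.subset_map_iff, eq_comm]
  simp only [subsetConv, hpowerset, Finset.sum_map]
  simp [← Finset.map_sdiff]

lemma prodWeight_mul_single_empty (W : κ → R) :
    prodWeight W * Pi.single ∅ 1 = Pi.single ∅ 1 := by
  ext T
  by_cases hT : T = ∅ <;> simp [hT, prodWeight]

lemma prodWeight_subsetConv_neg {R : Type*} [CommRing R] (F : κ → κ → R) (W : κ → R) :
    prodWeight W ⋆[F] prodWeight (-W) =
      prodWeight W * (prodWeight 1 ⋆[F] prodWeight (-1)) := by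
  rw [prodWeight_mul_subsetConv, prodWeight_mul, prodWeight_mul, mul_one, mul_neg_one]

end SubsetConvolution

section Determinants

variable {R κ : Type*} [CommRing R] [Fintype κ] [DecidableEq κ]

open Matrix in
lemma det_add_diagonal (M : Matrix κ κ R) (d : κ → R) :
    (M + diagonal d).det =
      ∑ S : Finset κ, (∏ j ∈ Sᶜ, d j) * (M.submatrix (↑) (↑) : Matrix S S R).det := by
  have hsum : (M + diagonal d).det =
      detRowAlternating (M.row + fun j ↦ d j • (1 : Matrix κ κ R).row j) := by
    refine congrArg det ?_
    ext j k
    change M j k + diagonal d j k = M j k + d j * (1 : Matrix κ κ R) j k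
    simp [diagonal_apply, one_apply]
  rw [hsum, AlternatingMap.map_add_univ]
  refine Finset.sum_congr rfl fun S _ ↦ ?_
  have hrows : S.piecewise M.row (fun j ↦ d j • (1 : Matrix κ κ R).row j) =
      fun j ↦ S.piecewise (fun _ ↦ 1) d j • S.piecewise M.row (1 : Matrix κ κ R).row j := by
    ext j : 1
    by_cases hj : j ∈ S <;> simp [hj]
  rw [hrows, AlternatingMap.map_smul_univ]
  change _ • det (of (S.piecewise M.row (1 : Matrix κ κ R).row)) = _
  rw [det_piecewise_one_eq_submatrix_det, Finset.prod_piecewise]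
  simp [Finset.compl_eq_univ_sdiff]

lemma det_eval_add (p : κ → Polynomial R) (hp : ∀ k, (p k).natDegree < Fintype.card κ)
    (y : κ → R) (c : R) :
    (Matrix.of fun j k ↦ (p k).eval (y j + c)).det =
      (Matrix.of fun j k ↦ (p k).eval (y j)).det := by
  set e := (Fintype.equivFin κ).symm
  set C := Matrix.of fun m k ↦ (p (e k)).coeff (m : Fin (Fintype.card κ))
  have hfactor (w : κ → R) : (Matrix.of fun j k ↦ (p k).eval (w j)).det =
      (Matrix.vandermonde (w ∘ e)).det * C.det := by
    rw [← Matrix.det_submatrix_equiv_self e, ← Matrix.det_mul]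
    congr 1
    ext j k
    simp [C, Matrix.mul_apply, Polynomial.eval_eq_sum_range' (hp (e k)), Finset.sum_range, mul_comm]
  rw [hfactor, hfactor, ← Matrix.det_vandermonde_add (y ∘ e) c]
  rfl

end Determinants

section TranslationMatrix

variable {κ : Type*} [Fintype κ] [DecidableEq κ] {c : ℂ} {y : κ → ℂ}

/-- The matrix of the translation `p(X) ↦ p(X + c)` on polynomials of degree less than `#κ`, in
the basis of the polynomials `∏ i ≠ k, (X - y i)`. The modified Izergin determinant is
the determinant of a row rescaling of it plus a scalar matrix. -/
def translationMatrix (c : ℂ) (y : κ → ℂ) : Matrix κ κ ℂ :=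
  Matrix.of fun j k ↦ (∏ i ∈ Finset.univ.erase j, fC c (y j) (y i)) / hC c (y j) (y k)

lemma eval_nodal_erase_ne_zero (hinj : Function.Injective y) (k : κ) :
    (Lagrange.nodal (Finset.univ.erase k) y).eval (y k) ≠ 0 := by
  rw [Lagrange.eval_nodal, Finset.prod_ne_zero_iff]
  exact fun i hi ↦ sub_ne_zero.2 (hinj.ne (Finset.ne_of_mem_erase hi).symm)

lemma translationMatrix_apply {j k : κ} (hjk : y j - y k + c ≠ 0) :
    translationMatrix c y j k = (Lagrange.nodal (Finset.univ.erase k) y).eval (y j + c) /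
      (Lagrange.nodal (Finset.univ.erase j) y).eval (y j) := by
  have hprod : c * ∏ i ∈ Finset.univ.erase j, (y j - y i + c) =
      (y j - y k + c) * ∏ i ∈ Finset.univ.erase k, (y j - y i + c) := by
    rw [Finset.mul_prod_erase _ (fun i ↦ y j - y i + c) (Finset.mem_univ k),
      ← Finset.mul_prod_erase _ _ (Finset.mem_univ j), sub_self, zero_add]
  simp only [translationMatrix, Matrix.of_apply, fC, hC, Lagrange.eval_nodal,
    Finset.prod_div_distrib, add_sub_right_comm]
  rw [div_div_eq_mul_div, div_mul_eq_mul_div, div_right_comm, mul_comm _ c, hprod,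
    mul_div_cancel_left₀ _ hjk]

lemma det_translationMatrix (hinj : Function.Injective y) (hres : ∀ i j, y i - y j + c ≠ 0) :
    (translationMatrix c y).det = 1 := by
  set Q : κ → Polynomial ℂ := fun k ↦ Lagrange.nodal (Finset.univ.erase k) y with hQ
  have hdiag : (Matrix.of fun j k ↦ (Q k).eval (y j)) =
      Matrix.diagonal fun j ↦ (Q j).eval (y j) := by
    ext j k
    obtain rfl | hjk := eq_or_ne j k
    · simp
    · simp [hQ, hjk, Lagrange.eval_nodal_at_node]
  have hscale : translationMatrix c y =
      Matrix.of fun j k ↦ ((Q j).eval (y j))⁻¹ *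
        (Matrix.of fun j k ↦ (Q k).eval (y j + c)) j k := by
    ext j k
    rw [translationMatrix_apply (hres j k), Matrix.of_apply, Matrix.of_apply, div_eq_inv_mul]
  have hdeg (k : κ) : (Q k).natDegree < Fintype.card κ := by
    rw [hQ, Lagrange.natDegree_nodal]
    exact Finset.card_erase_lt_of_mem (Finset.mem_univ k)
  rw [hscale, Matrix.det_mul_column, det_eval_add Q hdeg, hdiag, Matrix.det_diagonal,
    ← Finset.prod_mul_distrib]
  exact Finset.prod_eq_one fun j _ ↦ inv_mul_cancel₀ (eval_nodal_erase_ne_zero hinj j)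

/-- Translation preserves the leading coefficient, which every basis polynomial has equal to `1`. -/
lemma sum_translationMatrix (hinj : Function.Injective y) (hres : ∀ i j, y i - y j + c ≠ 0)
    (k : κ) : ∑ j, translationMatrix c y j k = 1 := by
  set Q := Lagrange.nodal (Finset.univ.erase k) y with hQ
  have hdeg : (Finset.univ : Finset κ).card = (Polynomial.taylor c Q).degree + 1 := by
    rw [Polynomial.degree_taylor, Lagrange.degree_nodal,
      ← Finset.card_erase_add_one (Finset.mem_univ k)]
    norm_cast
  have hlead := Lagrange.leadingCoeff_eq_sum hinj.injOn hdeg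
  rw [Polynomial.leadingCoeff_taylor, Lagrange.nodal_monic.leadingCoeff] at hlead
  simp only [hlead, translationMatrix_apply (hres _ k), Polynomial.taylor_eval,
    Lagrange.eval_nodal, hQ]

lemma det_submatrix_translationMatrix (hinj : Function.Injective y)
    (hres : ∀ i j, y i - y j + c ≠ 0) (S : Finset κ) :
    ((translationMatrix c y).submatrix (↑) (↑) : Matrix S S ℂ).det =
      ∏ j ∈ S, ∏ k ∈ Sᶜ, fC c (y j) (y k) := by
  have hinjS : Function.Injective fun i : S ↦ y i := hinj.comp Subtype.val_injective
  have hscale : ((translationMatrix c y).submatrix (↑) (↑) : Matrix S S ℂ) =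
      Matrix.of fun j k : S ↦ (∏ i ∈ Sᶜ, fC c (y j) (y i)) *
        translationMatrix c (fun i : S ↦ y i) j k := by
    ext j k
    have herase : (Finset.univ.erase j).map (Function.Embedding.subtype _) = S.erase j := by
      rw [Finset.map_erase, Finset.univ_eq_attach, Finset.attach_map_val]
      rfl
    have hunion : Finset.univ.erase (j : κ) = Sᶜ ∪ S.erase j := by
      have := j.2
      grind [Finset.mem_compl]
    have hdisj : Disjoint Sᶜ (S.erase (j : κ)) :=
      disjoint_compl_left.mono_right (Finset.erase_subset _ _)
    have hprod : ∏ i ∈ Finset.univ.erase (j : κ), fC c (y j) (y i) =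
        (∏ i ∈ Sᶜ, fC c (y j) (y i)) * ∏ i ∈ Finset.univ.erase j, fC c (y j) (y i) := by
      rw [hunion, Finset.prod_union hdisj, ← herase, Finset.prod_map]
      rfl
    simp only [translationMatrix, Matrix.submatrix_apply, Matrix.of_apply, hprod, mul_div_assoc]
  rw [hscale, Matrix.det_mul_column,
    det_translationMatrix hinjS fun i j ↦ hres i j, mul_one,
    Finset.prod_coe_sort S fun j ↦ ∏ i ∈ Sᶜ, fC c (y j) (y i)]

end TranslationMatrix

section Izergin

variable {ι ι' κ : Type*} [Fintype ι] [Fintype ι'] [DecidableEq κ] {c : ℂ} {y : κ → ℂ}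

lemma KIz_eq_det_add_diagonal [Fintype κ] (c z : ℂ) (x : ι → ℂ) (y : κ → ℂ) :
    KIz c z x y = ((Matrix.of fun j k ↦ (∏ i, fC c (x i) (y j)) * translationMatrix c y j k) +
      Matrix.diagonal fun _ ↦ -z).det := by
  rw [KIz]
  congr 1
  ext j k
  simp [translationMatrix, Matrix.diagonal_apply, mul_div_assoc, add_comm]

lemma KIz_eq_subsetConv_univ [Fintype κ] (hinj : Function.Injective y)
    (hres : ∀ i j, y i - y j + c ≠ 0) (z : ℂ) (x : ι → ℂ) :
    KIz c z x y =
      (prodWeight (fun j ↦ ∏ i, fC c (x i) (y j)) ⋆[fun i j ↦ fC c (y i) (y j)]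
        prodWeight fun _ ↦ -z) Finset.univ := by
  rw [KIz_eq_det_add_diagonal, det_add_diagonal, subsetConv, Finset.powerset_univ]
  refine Finset.sum_congr rfl fun S _ ↦ ?_
  set U : κ → ℂ := fun j ↦ ∏ i, fC c (x i) (y j)
  have hminor : ((Matrix.of fun j k ↦ U j * translationMatrix c y j k).submatrix (↑) (↑) :
      Matrix S S ℂ).det = (∏ j ∈ S, U j) * ∏ j ∈ S, ∏ k ∈ Sᶜ, fC c (y j) (y k) := by
    rw [← det_submatrix_translationMatrix hinj hres, ← Finset.prod_coe_sort S U,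
      ← Matrix.det_mul_column]
    rfl
  rw [hminor]
  simp only [prodWeight, Finset.compl_eq_univ_sdiff]
  ring

lemma KIz_eq_subsetConv (hinj : Function.Injective y)
    (hres : ∀ i j, y i - y j + c ≠ 0) (z : ℂ) (x : ι → ℂ) (T : Finset κ) :
    KIz c z x (fun i : T ↦ y i) =
      (prodWeight (fun j ↦ ∏ i, fC c (x i) (y j)) ⋆[fun i j ↦ fC c (y i) (y j)]
        prodWeight fun _ ↦ -z) T := by
  have hinjT : Function.Injective fun i : T ↦ y i := hinj.comp Subtype.val_injective
  rw [KIz_eq_subsetConv_univ hinjT fun i j ↦ hres i j]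
  conv_rhs => rw [← Finset.attach_map_val (s := T), subsetConv_map]
  simp only [prodWeight_map, Finset.univ_eq_attach]
  rfl

/-- By `sum_translationMatrix`, the all-ones row vector is in the left kernel of the matrix. -/
lemma KIz_one_of_isEmpty [Fintype κ] [Nonempty κ] [IsEmpty ι] (hinj : Function.Injective y)
    (hres : ∀ i j, y i - y j + c ≠ 0) (x : ι → ℂ) : KIz c 1 x y = 0 := by
  rw [KIz_eq_det_add_diagonal, ← Matrix.exists_vecMul_eq_zero_iff]
  refine ⟨1, one_ne_zero, ?_⟩
  ext k
  simp [Matrix.vecMul, dotProduct, Finset.sum_add_distrib, sum_translationMatrix hinj hres,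
    Matrix.diagonal_apply]

lemma prodWeight_one_subsetConv_neg_one (hinj : Function.Injective y)
    (hres : ∀ i j, y i - y j + c ≠ 0) :
    prodWeight 1 ⋆[fun i j ↦ fC c (y i) (y j)] prodWeight (-1) = Pi.single ∅ 1 := by
  ext T
  obtain rfl | hT := T.eq_empty_or_nonempty
  · simp [subsetConv, prodWeight]
  · have := hT.to_subtype
    have hinjT : Function.Injective fun i : T ↦ y i := hinj.comp Subtype.val_injective
    have hK := KIz_eq_subsetConv hinj hres 1 (Fin.elim0 : Fin 0 → ℂ) T
    rw [KIz_one_of_isEmpty hinjT fun i j ↦ hres i j] at hK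
    simpa [hT.ne_empty, Pi.one_def, Pi.neg_def] using hK.symm

theorem sum_KIz_mul_KIz [Fintype κ] (hinj : Function.Injective y)
    (hres : ∀ i j, y i - y j + c ≠ 0) (z₁ z₂ : ℂ) (u : ι → ℂ) (v : ι' → ℂ) :
    ∑ s : Finset κ, z₂ ^ s.card * KIz c z₁ u (fun i : s ↦ y i) *
        KIz c z₂ v (fun i : ↥sᶜ ↦ y i) * (∏ i ∈ sᶜ, ∏ j ∈ s, fC c (y i) (y j)) *
        (∏ j ∈ sᶜ, ∏ i, fC c (u i) (y j)) =
      KIz c (z₁ * z₂) (Sum.elim u v) y := by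
  set F : κ → κ → ℂ := fun i j ↦ fC c (y i) (y j) with hF
  set U : κ → ℂ := fun j ↦ ∏ i, fC c (u i) (y j) with hU
  set V : κ → ℂ := fun j ↦ ∏ i, fC c (v i) (y j) with hV
  have hcancel : prodWeight (U * fun _ ↦ -z₂) ⋆[F] prodWeight ((fun _ ↦ z₂) * U) =
      Pi.single ∅ 1 := by
    have hneg : (fun _ ↦ z₂) * U = -(U * fun _ ↦ -z₂) := by
      ext
      simp [mul_comm]
    rw [hneg, prodWeight_subsetConv_neg, prodWeight_one_subsetConv_neg_one hinj hres,
      prodWeight_mul_single_empty]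
  have hUV : (fun j ↦ ∏ i, fC c (Sum.elim u v i) (y j)) = U * V := by
    ext j
    simp [hU, hV]
  calc _ = ((prodWeight U * (prodWeight V ⋆[F] prodWeight fun _ ↦ -z₂)) ⋆[F]
        (prodWeight (fun _ ↦ z₂) * (prodWeight U ⋆[F] prodWeight fun _ ↦ -z₁))) Finset.univ := by
        rw [subsetConv_univ]
        refine Finset.sum_congr rfl fun s _ ↦ ?_
        simp only [KIz_eq_subsetConv hinj hres, Pi.mul_apply]
        simp only [prodWeight, Finset.prod_const, hF, hU, hV]
        ring
    _ = (prodWeight (U * V) ⋆[F]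
          (prodWeight (U * fun _ ↦ -z₂) ⋆[F] prodWeight ((fun _ ↦ z₂) * U)) ⋆[F]
          prodWeight ((fun _ ↦ z₂) * fun _ ↦ -z₁)) Finset.univ := by
        simp only [prodWeight_mul_subsetConv, prodWeight_mul, subsetConv_assoc]
    _ = (prodWeight (U * V) ⋆[F] prodWeight fun _ ↦ -(z₁ * z₂)) Finset.univ := by
        rw [hcancel, subsetConv_single_empty]
        congr 2
        ext
        simp [mul_comm]
    _ = KIz c (z₁ * z₂) (Sum.elim u v) y := by
        rw [KIz_eq_subsetConv_univ hinj hres, hUV]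

end Izergin

lemma KIz_append {κ : Type*} [Fintype κ] [DecidableEq κ] {n m : ℕ} (c z : ℂ) (u : Fin n → ℂ)
    (v : Fin m → ℂ) (y : κ → ℂ) : KIz c z (Fin.append u v) y = KIz c z (Sum.elim u v) y := by
  simp [KIz, Fin.prod_univ_add]

lemma fC_neg (c u v : ℂ) : fC (-c) u v = fC c v u := by
  rw [fC, fC, ← neg_div_neg_eq]
  ring

/-- Summation formula mixing two modified Izergin determinants into one
(Proposition `GenML` of the paper). -/
theorem stmt16
    (c : ℂ) (hc : c ≠ 0) (z1 z2 : ℂ) (l n m : ℕ)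
    (ξ : Fin l → ℂ) (u : Fin n → ℂ) (v : Fin m → ℂ)
    (hgen : Generic c (Fin.append (Fin.append u v) ξ)) :
    (∑ s : Finset (Fin l),
        z2 ^ s.card * KIz c z1 u (restr ξ s) * KIz c z2 v (restr ξ sᶜ) *
          (∏ i ∈ sᶜ, ∏ j ∈ s, fC c (ξ i) (ξ j)) *
          (∏ i, ∏ j ∈ sᶜ, fC c (u i) (ξ j)))
        = KIz c (z1 * z2) (Fin.append u v) ξ ∧
      (∑ s : Finset (Fin l),
        z2 ^ s.card * KIzBar c z1 u (restr ξ s) * KIzBar c z2 v (restr ξ sᶜ) *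
          (∏ i ∈ s, ∏ j ∈ sᶜ, fC c (ξ i) (ξ j)) *
          (∏ j ∈ sᶜ, ∏ i, fC c (ξ j) (u i)))
        = KIzBar c (z1 * z2) (Fin.append u v) ξ := by
  have hdiff (i j : Fin l) (hij : i ≠ j) : ξ i - ξ j ≠ 0 ∧ ξ i - ξ j ≠ c ∧ ξ i - ξ j ≠ -c := by
    have h := hgen (Fin.natAdd (n + m) i) (Fin.natAdd (n + m) j) (by simpa using hij)
    simp only [Fin.append_right] at h
    exact ⟨h.1, h.2.1, h.2.2.1⟩
  have hinj : Function.Injective ξ := fun i j h ↦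
    by_contra fun hij ↦ (hdiff i j hij).1 (sub_eq_zero.2 h)
  have hres (i j : Fin l) : ξ i - ξ j + c ≠ 0 ∧ ξ i - ξ j + -c ≠ 0 := by
    obtain rfl | hij := eq_or_ne i j
    · simpa using hc
    · exact ⟨mt eq_neg_of_add_eq_zero_left (hdiff i j hij).2.2,
        mt add_neg_eq_zero.1 (hdiff i j hij).2.1⟩
  constructor
  · rw [KIz_append, ← sum_KIz_mul_KIz hinj fun i j ↦ (hres i j).1]
    exact Finset.sum_congr rfl fun s _ ↦ congrArg _ Finset.prod_comm
  · rw [KIzBar, KIz_append, ← sum_KIz_mul_KIz hinj fun i j ↦ (hres i j).2]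
    simp only [fC_neg]
    exact Finset.sum_congr rfl fun s _ ↦ by rw [Finset.prod_comm (s := s)]; rfl
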